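/- Let S be a symmetric numerical semigroup with genus g and conductor c = 2g, let m ∈ S with c ≤ m ≤ 2c − 2, set n = m − c + 1 and q = 2c − 2 − m, and assume n ∉ S. Let n′ = min{s ∈ S : s > n} and q′ = c − 1 − n′. Then the minimum formula holds at m if and only if ν(q̄) ≥ δ(q̄) for every integer q̄ with q′ + 3 ≤ q̄ ≤ q (all such q̄ belong to S). -/

import Mathlib

/-!
Let `c` be the conductor and write an integer `≥ c` as `r = c - 1 + t` with `t ≥ 1`.
Inclusion–exclusion on the pairs `(a, r - a)` gives
`ν(r) = r + 1 - 2g + D(r) = t + D(r)`, where `D(r)` counts the pairs of gaps with sum `r`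
(`nu_eq_add_gapPairs`). For symmetric `S` the reflection `x ↦ c - 1 - x` exchanges gaps and
elements below `c`, so `D(r) = ν(c - 1 - t)` if `t < c` (`gapPairs_eq_nu`), and `D(r) = 0` if
`t ∈ S` (`gapPairs_eq_zero`).

Since `n ∉ S`, the right-hand side of the minimum formula is `n'`, and this value is attained by
`ν` at `r = c - 1 + n'`. Larger `r` have `ν(r) ≥ t > n'`, so the formula says exactly that
`t + ν(c - 1 - t) ≥ n'` for `n ≤ t < n'`. With `q̄ = c - 1 - t` this reads `ν(q̄) ≥ q̄ - q'`
for `q' < q̄ ≤ q`. As `n, …, n' - 1` are gaps and `n' ∈ S`, reflection shows that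
`q' + 1, …, q` lie in `S` while `q'` does not, whence `δ(q̄) = q̄ - q'`. For `q̄ = q' + 1` and
`q̄ = q' + 2` the inequality is automatic, because `(q̄, 0)` and `(0, q̄)` are counted by `ν(q̄)`.
-/

/-- A numerical semigroup: a subset of ℕ containing 0, closed under addition,
with finite complement in ℕ. -/
def IsNumericalSemigroup (S : Set ℕ) : Prop :=
  0 ∈ S ∧ (∀ a b, a ∈ S → b ∈ S → a + b ∈ S) ∧ Sᶜ.Finite

/-- The genus of a numerical semigroup: the number of gaps. -/
noncomputable def genus (S : Set ℕ) : ℕ := Sᶜ.ncard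

/-- The conductorNS: the least `c` such that every `n ≥ c` belongs to `S`. -/
noncomputable def conductorNS (S : Set ℕ) : ℕ := sInf {c | ∀ n, c ≤ n → n ∈ S}

/-- `nu S r` is the number of pairs `(a,b) ∈ S × S` with `a + b = r`. -/
noncomputable def nu (S : Set ℕ) (r : ℕ) : ℕ :=
  {p : ℕ × ℕ | p.1 ∈ S ∧ p.2 ∈ S ∧ p.1 + p.2 = r}.ncard

/-- The Feng–Rao distance: `δ_FR(m) = min {ν(r) : r ∈ S, r ≥ m}`. -/
noncomputable def deltaFR (S : Set ℕ) (m : ℕ) : ℕ :=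
  sInf (nu S '' {r | r ∈ S ∧ m ≤ r})

/-- Membership of an integer in a subset of ℕ (negative integers never belong). -/
def memZ (S : Set ℕ) (r : ℤ) : Prop := 0 ≤ r ∧ r.toNat ∈ S

/-- `S` is symmetric: for every integer `r`, `r ∈ S ↔ c - 1 - r ∉ S`. -/
def IsSymmetricNS (S : Set ℕ) : Prop :=
  ∀ r : ℤ, memZ S r ↔ ¬ memZ S ((conductorNS S : ℤ) - 1 - r)

/-- `δ(q)`: the least integer `d ≥ 1` such that `q - d ∉ S`
(negative integers are not in `S`). -/
noncomputable def deltaGap (S : Set ℕ) (q : ℕ) : ℕ :=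
  sInf {d | 1 ≤ d ∧ ¬ memZ S ((q : ℤ) - (d : ℤ))}

/-- The `i`-th Apéry element of `S` relative to `e`:
the least element of `S` congruent to `i` modulo `e`. -/
noncomputable def apery (S : Set ℕ) (e i : ℕ) : ℕ :=
  sInf {m | m ∈ S ∧ m % e = i % e}

/-- The Apéry relations `α_{i,j}` defined by `a_i + a_j = a_{(i+j) % e} + α_{i,j} * e`. -/
noncomputable def aperyRel (S : Set ℕ) (e i j : ℕ) : ℕ :=
  (apery S e i + apery S e j - apery S e ((i + j) % e)) / e

/-- The "minimum formula" holds at `m`: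
`δ_FR(m) = min {r ∈ S : r ≥ m + 1 - 2g}`. -/
def MinFormula (S : Set ℕ) (m : ℕ) : Prop :=
  deltaFR S m = sInf {r | r ∈ S ∧ (m : ℤ) + 1 - 2 * (genus S : ℤ) ≤ (r : ℤ)}


open Finset Classical in
lemma nu_eq_card (S : Set ℕ) (r : ℕ) :
    nu S r = #{a ∈ range (r + 1) | a ∈ S ∧ r - a ∈ S} := by
  unfold nu
  rw [← Set.ncard_coe_finset]
  refine Set.ncard_congr (fun p _ => p.1) ?_ ?_ ?_
  · rintro ⟨a, b⟩ ⟨h1, h2, h3⟩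
    simp only at h1 h2 h3
    have : r - a = b := by omega
    simp only [coe_filter, mem_range, Set.mem_ofPred_eq, this]
    exact ⟨by omega, h1, h2⟩
  · rintro ⟨a, b⟩ ⟨a', b'⟩ ⟨_, _, h3⟩ ⟨_, _, h3'⟩ h
    simp only at h3 h3' h
    ext <;> simp only <;> omega
  · intro a ha
    simp only [coe_filter, mem_range, Set.mem_ofPred_eq] at ha
    exact ⟨(a, r - a), ⟨ha.2.1, ha.2.2, by simp only; omega⟩, rfl⟩

open Finset Classical in
/-- The number of pairs of gaps with sum `r`, a pair being recorded by its first component. -/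
noncomputable def gapPairs (S : Set ℕ) (r : ℕ) : ℕ :=
  #{a ∈ range (r + 1) | a ∉ S ∧ r - a ∉ S}

open Finset Classical in
/-- Inclusion–exclusion: all gaps are `≤ r`, so each of the conditions `a ∉ S`, `r - a ∉ S`
excludes exactly `g` of the `r + 1 = 2g + t` values of `a`. -/
lemma nu_eq_add_gapPairs (S : Set ℕ) (c t : ℕ) (hc : 1 ≤ c) (ht : 1 ≤ t) (hcS : ∀ x, c ≤ x → x ∈ S)
    (hg : c = 2 * Sᶜ.ncard) :
    nu S (c - 1 + t) = t + gapPairs S (c - 1 + t) := by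
  obtain ⟨r, hr⟩ : ∃ r, r = c - 1 + t := ⟨_, rfl⟩
  have hA : #{a ∈ range (r + 1) | a ∉ S} = Sᶜ.ncard := by
    rw [← Set.ncard_coe_finset]
    congr 1
    ext x
    simp only [coe_filter, mem_range, Set.mem_ofPred_eq, Set.mem_compl_iff]
    refine ⟨fun h => h.2, fun h => ⟨?_, h⟩⟩
    by_contra h'
    exact h (hcS x (by omega))
  have hB : #{a ∈ range (r + 1) | r - a ∉ S} = Sᶜ.ncard := by
    rw [← hA]
    refine card_bij (fun a _ => r - a) ?_ ?_ ?_
    · intro a ha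
      simp only [mem_filter, mem_range] at ha ⊢
      exact ⟨by omega, ha.2⟩
    · intro a ha b hb hab
      simp only [mem_filter, mem_range] at ha hb hab
      omega
    · intro b hb
      simp only [mem_filter, mem_range] at hb
      refine ⟨r - b, ?_, by omega⟩
      simp only [mem_filter, mem_range]
      have : r - (r - b) = b := by omega
      rw [this]
      exact ⟨by omega, hb.2⟩
  have hU := card_union_add_card_inter {a ∈ range (r + 1) | a ∉ S} {a ∈ range (r + 1) | r - a ∉ S}
  rw [← filter_or, ← filter_and, hA, hB] at hU
  have hC := card_filter_add_card_filter_not (s := range (r + 1)) (fun a => a ∈ S ∧ r - a ∈ S)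
  rw [card_range] at hC
  have hD : #{a ∈ range (r + 1) | ¬ (a ∈ S ∧ r - a ∈ S)} =
      #{a ∈ range (r + 1) | a ∉ S ∨ r - a ∉ S} := by
    congr 1
    ext a
    simp only [mem_filter]
    tauto
  rw [nu_eq_card, gapPairs, ← hr]
  omega

open Finset Classical in
/-- Reflecting both entries in `x ↦ c - 1 - x` turns pairs of gaps into pairs of elements. -/
lemma gapPairs_eq_nu (S : Set ℕ) (c t : ℕ) (htc : t < c) (hcS : ∀ x, c ≤ x → x ∈ S)
    (hsy : ∀ x, x < c → (x ∈ S ↔ c - 1 - x ∉ S)) :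
    gapPairs S (c - 1 + t) = nu S (c - 1 - t) := by
  rw [nu_eq_card, gapPairs]
  have hlt : ∀ x, x ∉ S → x < c := fun x hx => by
    by_contra h
    exact hx (hcS x (by omega))
  refine card_bij (fun a _ => c - 1 - a) ?_ ?_ ?_
  · intro a ha
    simp only [mem_filter, mem_range] at ha ⊢
    obtain ⟨h1, h2, h3⟩ := ha
    have l2 := hlt _ h2
    have l3 := hlt _ h3
    have e : c - 1 - t - (c - 1 - a) = c - 1 - (c - 1 + t - a) := by omega
    rw [e]
    refine ⟨by omega, ?_, ?_⟩
    · by_contra h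
      exact h2 ((hsy _ l2).2 h)
    · by_contra h
      exact h3 ((hsy _ l3).2 h)
  · intro a ha b hb hab
    simp only [mem_filter, mem_range] at ha hb hab
    have := hlt _ ha.2.1
    have := hlt _ hb.2.1
    omega
  · intro b hb
    simp only [mem_filter, mem_range] at hb
    obtain ⟨h1, h2, h3⟩ := hb
    refine ⟨c - 1 - b, ?_, by omega⟩
    simp only [mem_filter, mem_range]
    have e : c - 1 + t - (c - 1 - b) = c - 1 - (c - 1 - t - b) := by omega
    rw [e]
    exact ⟨by omega, (hsy _ (by omega)).1 h2, (hsy _ (by omega)).1 h3⟩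

open Finset Classical in
/-- If `a` and `c - 1 + t - a` are gaps, then their reflections are elements of `S` with sum
`c - 1 - t`, the reflection of `t`; hence `t` is a gap. -/
lemma gapPairs_eq_zero (S : Set ℕ) (c t : ℕ) (htS : t ∈ S)
    (hadd : ∀ a b, a ∈ S → b ∈ S → a + b ∈ S) (hcS : ∀ x, c ≤ x → x ∈ S)
    (hsy : ∀ x, x < c → (x ∈ S ↔ c - 1 - x ∉ S)) :
    gapPairs S (c - 1 + t) = 0 := by
  rw [gapPairs, card_eq_zero, filter_eq_empty_iff]
  rintro a ha ⟨h2, h3⟩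
  rw [mem_range] at ha
  have hlt : ∀ x, x ∉ S → x < c := fun x hx => by
    by_contra h
    exact hx (hcS x (by omega))
  have l2 := hlt _ h2
  have l3 := hlt _ h3
  have m2 : c - 1 - a ∈ S := by
    by_contra h
    exact h2 ((hsy _ l2).2 h)
  have m3 : c - 1 - (c - 1 + t - a) ∈ S := by
    by_contra h
    exact h3 ((hsy _ l3).2 h)
  have := hadd _ _ m2 m3
  have e : c - 1 - a + (c - 1 - (c - 1 + t - a)) = c - 1 - t := by omega
  rw [e] at this
  exact (hsy t (by omega)).1 htS this

lemma memZ_natCast (S : Set ℕ) (x : ℕ) : memZ S (x : ℤ) ↔ x ∈ S := by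
  simp [memZ]

/-- for symmetric `S` with `c = 2g`, `m ∈ S` with `c ≤ m ≤ 2c-2`,
`n = m-c+1 ∉ S`, `q = 2c-2-m`, `n' = min {s ∈ S : s > n}` and `q' = c-1-n'`,
the minimum formula holds at `m` iff `ν(q̄) ≥ δ(q̄)` for every integer `q̄`
with `q' + 3 ≤ q̄ ≤ q`. -/
theorem stmt_13 (S : Set ℕ) (hS : IsNumericalSemigroup S) (hsym : IsSymmetricNS S)
    (hcg : conductorNS S = 2 * genus S)
    (m : ℕ) (hm : m ∈ S) (hc : conductorNS S ≤ m)
    (hm2 : (m : ℤ) ≤ 2 * (conductorNS S : ℤ) - 2)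
    (n q : ℕ)
    (hn : (n : ℤ) = (m : ℤ) - (conductorNS S : ℤ) + 1)
    (hq : (q : ℤ) = 2 * (conductorNS S : ℤ) - 2 - (m : ℤ))
    (hnS : n ∉ S)
    (n' : ℕ) (hn' : n' = sInf {s | s ∈ S ∧ n < s})
    (q' : ℤ) (hq' : q' = (conductorNS S : ℤ) - 1 - (n' : ℤ)) :
    MinFormula S m ↔
      ∀ qb : ℕ, q' + 3 ≤ (qb : ℤ) → qb ≤ q → deltaGap S qb ≤ nu S qb := by
  obtain ⟨h0, hadd, hfin⟩ := hS
  have hne : {c | ∀ n, c ≤ n → n ∈ S}.Nonempty := by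
    obtain ⟨b, hb⟩ := hfin.bddAbove
    refine ⟨b + 1, fun x hx => ?_⟩
    by_contra h
    have := hb h
    omega
  have hcS : ∀ x, conductorNS S ≤ x → x ∈ S := Nat.sInf_mem hne
  rw [IsSymmetricNS] at hsym
  have hcg' : 2 * (genus S : ℤ) = (conductorNS S : ℤ) := by exact_mod_cast hcg.symm
  rw [MinFormula, hcg']
  clear hcg'
  unfold genus at hcg
  generalize conductorNS S = c at *
  have hsy : ∀ x, x < c → (x ∈ S ↔ c - 1 - x ∉ S) := by
    intro x hx
    have h := hsym x
    have e : (c : ℤ) - 1 - x = ((c - 1 - x : ℕ) : ℤ) := by omega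
    rwa [e, memZ_natCast, memZ_natCast] at h
  have hnc : n + 1 ≤ c := by omega
  have hn'mem : n' ∈ S ∧ n < n' := by
    rw [hn']
    exact Nat.sInf_mem (s := {s | s ∈ S ∧ n < s}) ⟨c, hcS c le_rfl, hnc⟩
  have hn'le : ∀ s, s ∈ S → n < s → n' ≤ s := fun s h1 h2 => by
    rw [hn']
    exact Nat.sInf_le ⟨h1, h2⟩
  obtain ⟨hn'S, hnn'⟩ := hn'mem
  have hn'c : n' ≤ c := hn'le c (hcS c le_rfl) hnc
  have hgap : ∀ t, n ≤ t → t < n' → t ∉ S := by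
    intro t h1 h2 h3
    rcases h1.eq_or_lt with rfl | h1
    · exact hnS h3
    · have := hn'le t h3 h1
      omega
  have hR : sInf {r | r ∈ S ∧ (m : ℤ) + 1 - (c : ℤ) ≤ (r : ℤ)} = n' := by
    rw [hn']
    congr 1
    ext r
    simp only [Set.mem_ofPred_eq]
    refine and_congr_right fun hr => ⟨fun h => ?_, fun h => by omega⟩
    rcases (show n ≤ r by omega).eq_or_lt with rfl | h'
    · exact absurd hr hnS
    · exact h'
  have hnu : ∀ t, 1 ≤ t → nu S (c - 1 + t) = t + gapPairs S (c - 1 + t) :=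
    fun t ht => nu_eq_add_gapPairs S c t (by omega) ht hcS hcg
  have hnun' : nu S (c - 1 + n') = n' := by
    rw [hnu n' (by omega), gapPairs_eq_zero S c n' hn'S hadd hcS hsy, add_zero]
  have hnut : ∀ t, 1 ≤ t → t < c → nu S (c - 1 + t) = t + nu S (c - 1 - t) := fun t h1 h2 => by
    rw [hnu t h1, gapPairs_eq_nu S c t h2 hcS hsy]
  have hL : deltaFR S m = n' ↔ ∀ r, m ≤ r → n' ≤ nu S r := by
    have hmem : n' ∈ nu S '' {r | r ∈ S ∧ m ≤ r} :=
      ⟨c - 1 + n', ⟨hcS _ (by omega), by omega⟩, hnun'⟩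
    unfold deltaFR
    constructor
    · intro h r hr
      rw [← h]
      exact Nat.sInf_le ⟨r, ⟨hcS _ (by omega), hr⟩, rfl⟩
    · intro h
      refine le_antisymm (Nat.sInf_le hmem) (le_csInf ⟨_, hmem⟩ ?_)
      rintro _ ⟨r, ⟨_, hr⟩, rfl⟩
      exact h r hr
  have hq'S : ¬ memZ S q' := by
    rw [hsym q', not_not]
    have e : (c : ℤ) - 1 - q' = (n' : ℤ) := by omega
    rw [e, memZ_natCast]
    exact hn'S
  have hqS : ∀ x : ℤ, q' < x → x ≤ q → memZ S x := by
    intro x h1 h2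
    rw [hsym x]
    obtain ⟨t, ht⟩ : ∃ t : ℕ, (t : ℤ) = (c : ℤ) - 1 - x := ⟨((c : ℤ) - 1 - x).toNat, by omega⟩
    rw [← ht, memZ_natCast]
    exact hgap t (by omega) (by omega)
  have hdelta : ∀ qb : ℕ, q' < qb → qb ≤ q → (deltaGap S qb : ℤ) = qb - q' := by
    intro qb h1 h2
    obtain ⟨d, hd⟩ : ∃ d : ℕ, (d : ℤ) = qb - q' := ⟨((qb : ℤ) - q').toNat, by omega⟩
    rw [← hd]
    congr 1
    have hmem : d ∈ {d : ℕ | 1 ≤ d ∧ ¬ memZ S ((qb : ℤ) - (d : ℤ))} := by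
      refine ⟨by omega, ?_⟩
      rwa [hd, sub_sub_cancel]
    refine le_antisymm (Nat.sInf_le hmem) (le_csInf ⟨_, hmem⟩ ?_)
    rintro e ⟨he1, he2⟩
    by_contra hlt
    exact he2 (hqS _ (by omega) (by omega))
  rw [hR, hL]
  constructor
  · intro h qb h1 h2
    have hd := hdelta qb (by omega) h2
    have h3 := h (c - 1 + (c - 1 - qb)) (by omega)
    rw [hnut _ (by omega) (by omega)] at h3
    have e : c - 1 - (c - 1 - qb) = qb := by omega
    rw [e] at h3
    omega
  · intro h r hr
    obtain ⟨t, rfl⟩ : ∃ t, r = c - 1 + t := ⟨r - (c - 1), by omega⟩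
    rcases le_or_gt n' t with htn | htn
    · rw [hnu t (by omega)]
      omega
    rw [hnut t (by omega) (by omega)]
    obtain ⟨qb, hqb⟩ : ∃ qb, qb = c - 1 - t := ⟨_, rfl⟩
    rw [← hqb]
    rcases le_or_gt (q' + 3) qb with h3 | h3
    · have := h qb h3 (by omega)
      have := hdelta qb (by omega) (by omega)
      omega
    have hqbS : qb ∈ S := (memZ_natCast S qb).1 (hqS qb (by omega) (by omega))
    classical
    -- `qb` is `q' + 1` or `q' + 2`: the summands `0` and `qb` suffice. They are distinct in
    -- the second case, since `n' ≤ c` gives `q' ≥ -1`.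
    have hsub : ({0, qb} : Finset ℕ) ⊆
        {a ∈ Finset.range (qb + 1) | a ∈ S ∧ qb - a ∈ S} := by
      intro a ha
      rw [Finset.mem_insert, Finset.mem_singleton] at ha
      rcases ha with rfl | rfl <;> simp [h0, hqbS]
    have hcard := Finset.card_le_card hsub
    have hν : nu S qb = _ := nu_eq_card S qb
    rcases Nat.eq_zero_or_pos qb with hz | hz
    · subst hz
      simp only [Finset.pair_eq_singleton, Finset.card_singleton] at hcard
      have : 1 ≤ nu S 0 := by
        rw [hν]
        convert hcard
      omega
    · rw [Finset.card_pair hz.ne] at hcard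
      have : 2 ≤ nu S qb := by
        rw [hν]
        convert hcard
      omega
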